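/- Let p be an odd prime and c a positive integer not divisible by p, and let c_0 \in \{1, \dots, p-1\} with c \equiv c_0 \pmod p. Then: (i) E^{c_0}(S^{(c)}) \subseteq S^{(c - 2c_0)} + p \cdot L; (ii) E^p(L) \subseteq p \cdot L; and (iii) if in addition c > c_0, n \ge c-1 and n \equiv c-1 \pmod 2, then E^{c_0}(S^{(c)}) \not\subseteq p \cdot L. -/

import Mathlib

open scoped TensorProduct

/-- The `n`-fold tensor power `L = (ℤ²)^{⊗ n}` over `ℤ`. -/
abbrev Ltens (n : ℕ) := ⨂[ℤ] _ : Fin n, (Fin 2 → ℤ)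

/-- `e : ℤ² → ℤ²` with `e(e₋) = e₊`, `e(e₊) = 0`, where `e₋ = (1,0)`, `e₊ = (0,1)`. -/
noncomputable def eMap : (Fin 2 → ℤ) →ₗ[ℤ] (Fin 2 → ℤ) := Matrix.toLin' !![0, 0; 1, 0]

/-- `f : ℤ² → ℤ²` with `f(e₊) = e₋`, `f(e₋) = 0`. -/
noncomputable def fMap : (Fin 2 → ℤ) →ₗ[ℤ] (Fin 2 → ℤ) := Matrix.toLin' !![0, 1; 0, 0]

/-- `h : ℤ² → ℤ²` with `h(e₊) = e₊`, `h(e₋) = -e₋`. -/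
noncomputable def hMap : (Fin 2 → ℤ) →ₗ[ℤ] (Fin 2 → ℤ) := Matrix.toLin' !![-1, 0; 0, 1]

/-- `E = ∑ᵢ id ⊗ ⋯ ⊗ e ⊗ ⋯ ⊗ id` acting on `(ℤ²)^{⊗ n}`. -/
noncomputable def Eop (n : ℕ) : Module.End ℤ (Ltens n) :=
  ∑ i : Fin n, PiTensorProduct.map (Function.update (fun _ => LinearMap.id) i eMap)

/-- `F = ∑ᵢ id ⊗ ⋯ ⊗ f ⊗ ⋯ ⊗ id` acting on `(ℤ²)^{⊗ n}`. -/
noncomputable def Fop (n : ℕ) : Module.End ℤ (Ltens n) :=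
  ∑ i : Fin n, PiTensorProduct.map (Function.update (fun _ => LinearMap.id) i fMap)

/-- `H = ∑ᵢ id ⊗ ⋯ ⊗ h ⊗ ⋯ ⊗ id` acting on `(ℤ²)^{⊗ n}`. -/
noncomputable def Hop (n : ℕ) : Module.End ℤ (Ltens n) :=
  ∑ i : Fin n, PiTensorProduct.map (Function.update (fun _ => LinearMap.id) i hMap)

/-- `S^{(c)} = {v ∈ L : F v = 0, H v = -(c-1) v}`. -/
def Sspace (n : ℕ) (c : ℤ) : Set (Ltens n) :=
  {v | Fop n v = 0 ∧ Hop n v = (-(c - 1)) • v}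


structure Sl2Sys (ι L : Type*) [AddCommGroup L] where
  E : ι → Module.End ℤ L
  F : ι → Module.End ℤ L
  E2 : ∀ i, E i * E i = 0
  F2 : ∀ i, F i * F i = 0
  EF : ∀ i, E i * F i + F i * E i = 1
  cEE : ∀ i j, Commute (E i) (E j)
  cFF : ∀ i j, Commute (F i) (F j)
  cEF : ∀ i j, i ≠ j → Commute (E i) (F j)

set_option linter.unusedSectionVars false
namespace Sl2Sys
variable {ι L : Type*} [AddCommGroup L] [DecidableEq ι] (S : Sl2Sys ι L)

def H (i : ι) : Module.End ℤ L := S.E i * S.F i - S.F i * S.E i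
def sE (U : Finset ι) : Module.End ℤ L := ∑ i ∈ U, S.E i
def sF (U : Finset ι) : Module.End ℤ L := ∑ i ∈ U, S.F i
def sH (U : Finset ι) : Module.End ℤ L := ∑ i ∈ U, S.H i

lemma cEsE (i : ι) (U) : Commute (S.E i) (S.sE U) :=
  Commute.sum_right _ _ _ fun j _ => S.cEE i j
lemma cFsF (i : ι) (U) : Commute (S.F i) (S.sF U) :=
  Commute.sum_right _ _ _ fun j _ => S.cFF i j
lemma csEsE (A U) : Commute (S.sE A) (S.sE U) :=
  Commute.sum_left _ _ _ fun j _ => S.cEsE j U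
lemma cEsF (i : ι) (U) (h : i ∉ U) : Commute (S.E i) (S.sF U) :=
  Commute.sum_right _ _ _ fun j hj => S.cEF i j (by rintro rfl; exact h hj)
lemma cFsE (i : ι) (U) (h : i ∉ U) : Commute (S.F i) (S.sE U) :=
  Commute.sum_right _ _ _ fun j hj => (S.cEF j i (by rintro rfl; exact h hj)).symm
lemma csEsF (A U) (h : Disjoint A U) : Commute (S.sE A) (S.sF U) :=
  Commute.sum_left _ _ _ fun j hj => S.cEsF j U (Finset.disjoint_left.1 h hj)
lemma cEH (i j : ι) (h : i ≠ j) : Commute (S.E i) (S.H j) :=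
  ((S.cEE i j).mul_right (S.cEF i j h)).sub_right ((S.cEF i j h).mul_right (S.cEE i j))
lemma cFH (i j : ι) (h : i ≠ j) : Commute (S.F i) (S.H j) :=
  (((S.cEF j i h.symm).symm).mul_right (S.cFF i j)).sub_right
    ((S.cFF i j).mul_right ((S.cEF j i h.symm).symm))
lemma cEsH (i : ι) (U) (h : i ∉ U) : Commute (S.E i) (S.sH U) :=
  Commute.sum_right _ _ _ fun j hj => S.cEH i j (by rintro rfl; exact h hj)
lemma cFsH (i : ι) (U) (h : i ∉ U) : Commute (S.F i) (S.sH U) :=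
  Commute.sum_right _ _ _ fun j hj => S.cFH i j (by rintro rfl; exact h hj)

lemma EFE (i) : S.E i * S.F i * S.E i = S.E i := by
  have := congrArg (· * S.E i) (S.EF i)
  simpa [add_mul, mul_assoc, S.E2] using this
lemma FEF (i) : S.F i * S.E i * S.F i = S.F i := by
  have := congrArg (· * S.F i) (S.EF i)
  simpa [add_mul, mul_assoc, S.F2] using this
lemma HE (i) : S.H i * S.E i = S.E i := by
  rw [H, sub_mul, S.EFE, mul_assoc, S.E2, mul_zero, sub_zero]
lemma EH (i) : S.E i * S.H i = - S.E i := by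
  rw [H, mul_sub, ← mul_assoc, S.E2, ← mul_assoc, S.EFE, zero_mul, zero_sub]
lemma FH (i) : S.F i * S.H i = S.F i := by
  rw [H, mul_sub, ← mul_assoc, S.FEF, ← mul_assoc, S.F2, zero_mul, sub_zero]

lemma sH_E (i : ι) (U) (h : i ∈ U) : S.sH U * S.E i = S.E i * S.sH U + 2 * S.E i := by
  have e : S.sH U = S.sH (U.erase i) + S.H i := (Finset.sum_erase_add _ _ h).symm
  rw [e, add_mul, mul_add, ← (S.cEsH i _ (Finset.notMem_erase i U)).eq, S.HE, S.EH]
  noncomm_ring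
lemma sH_sE (A U) (h : A ⊆ U) : S.sH U * S.sE A = S.sE A * S.sH U + 2 * S.sE A := by
  simp only [sE, Finset.mul_sum, Finset.sum_mul, ← Finset.sum_add_distrib]
  exact Finset.sum_congr rfl fun i hi => S.sH_E i U (h hi)
lemma F_sE (i : ι) (U) (h : i ∈ U) : S.F i * S.sE U = S.sE U * S.F i - S.H i := by
  have e : S.sE U = S.sE (U.erase i) + S.E i := (Finset.sum_erase_add _ _ h).symm
  rw [e, add_mul, mul_add, ← (S.cFsE i _ (Finset.notMem_erase i U)).eq, H]
  noncomm_ring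
lemma sF_sE (U) : S.sF U * S.sE U = S.sE U * S.sF U - S.sH U := by
  conv_lhs => rw [sF, Finset.sum_mul]
  conv_rhs => rw [sF, Finset.mul_sum, sH, ← Finset.sum_sub_distrib]
  exact Finset.sum_congr rfl fun i hi => S.F_sE i U hi

/-- weight shift -/
lemma sH_pow (A U) (h : A ⊆ U) (v : L) (l : ℤ) (hv : S.sH U v = l • v) (k : ℕ) :
    S.sH U ((S.sE A ^ k) v) = (l + 2 * k) • (S.sE A ^ k) v := by
  induction k with
  | zero => simpa using hv
  | succ k ih =>
    have := congrArg (fun f => f ((S.sE A ^ k) v)) (S.sH_sE A U h)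
    simp only [Module.End.mul_apply, LinearMap.add_apply] at this
    rw [pow_succ', Module.End.mul_apply, this, ih, map_zsmul]
    have e2 : (2 : Module.End ℤ L) (S.sE A ((S.sE A ^ k) v)) = (2:ℤ) • (S.sE A ((S.sE A ^ k) v)) := by
      rw [two_zsmul, ← one_add_one_eq_two]; rfl
    rw [e2, ← add_smul]; push_cast; ring_nf

lemma sF_pow (U) (v : L) (l : ℤ) (hv : S.sH U v = l • v) (hF : S.sF U v = 0) (k : ℕ) :
    S.sF U ((S.sE U ^ (k+1)) v) = (-(k+1) * (l + k)) • (S.sE U ^ k) v := by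
  induction k with
  | zero =>
    have := congrArg (fun f => f v) (S.sF_sE U)
    simp only [Module.End.mul_apply, LinearMap.sub_apply] at this
    simp [this, hF, hv]
  | succ k ih =>
    have := congrArg (fun f => f ((S.sE U ^ (k+1)) v)) (S.sF_sE U)
    simp only [Module.End.mul_apply, LinearMap.sub_apply] at this
    rw [pow_succ', Module.End.mul_apply, this, ih, S.sH_pow U U subset_rfl v l hv, map_zsmul,
      ← Module.End.mul_apply, ← pow_succ', ← sub_smul]
    push_cast; ring_nf

lemma sE_nilp (U) : IsNilpotent (S.sE U) :=
  Commute.isNilpotent_sum (fun i _ => ⟨2, by rw [sq, S.E2]⟩) (fun i j _ _ => S.cEE i j)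

lemma pos_zero (tf : ∀ (k : ℤ) (x : L), k ≠ 0 → k • x = 0 → x = 0) (U) (v : L) (l : ℤ) (hl : 0 < l) (hv : S.sH U v = l • v)
    (hF : S.sF U v = 0) : v = 0 := by
  obtain ⟨N, hN⟩ := S.sE_nilp U
  have h : ∀ k, (S.sE U ^ k) v = 0 → v = 0 := by
    intro k
    induction k with
    | zero => intro h; simpa using h
    | succ k ih =>
      intro h
      apply ih
      have := S.sF_pow U v l hv hF k
      rw [h, map_zero] at this
      have h2 : (-(k+1) * (l + k) : ℤ) ≠ 0 := by
        apply mul_ne_zero <;> omega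
      exact tf _ _ h2 this.symm
  exact h N (by rw [hN]; rfl)

structure Good (U T : Finset ι) (v : L) : Prop where
  sub : T ⊆ U
  out : ∀ i, i ∉ U → S.F i v = 0
  tee : ∀ i ∈ T, S.F i v = 0
  kF : S.sF (U \ T) v = 0
  kE : S.sE (U \ T) v = 0

variable {S}

lemma comm_app {a b : Module.End ℤ L} (h : Commute a b) (v : L) : a (b v) = b (a v) :=
  congrArg (fun f => f v) h.eq

lemma EFv (S : Sl2Sys ι L) (i) (v : L) : S.E i (S.F i v) + S.F i (S.E i v) = v :=
  congrArg (fun f => f v) (S.EF i)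

lemma FE_of (i) (v : L) (h : S.F i v = 0) : S.F i (S.E i v) = v := by
  have := S.EFv i v
  rwa [h, map_zero, zero_add] at this

lemma H_of (i) (v : L) (h : S.F i v = 0) : S.H i v = - v := by
  simp [H, h, FE_of i v h]

lemma sH_of (T : Finset ι) (v : L) (h : ∀ i ∈ T, S.F i v = 0) : S.sH T v = (-(T.card : ℤ)) • v := by
  rw [sH, LinearMap.sum_apply, Finset.sum_congr rfl fun i hi => H_of i v (h i hi)]
  simp
lemma sF_of (T : Finset ι) (v : L) (h : ∀ i ∈ T, S.F i v = 0) : S.sF T v = 0 := by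
  rw [sF, LinearMap.sum_apply, Finset.sum_congr rfl fun i hi => h i hi]
  simp

lemma sH_split (S : Sl2Sys ι L) {T U} (h : T ⊆ U) : S.sH U = S.sH (U \ T) + S.sH T := (Finset.sum_sdiff h).symm
lemma sE_split (S : Sl2Sys ι L) {T U} (h : T ⊆ U) : S.sE U = S.sE (U \ T) + S.sE T := (Finset.sum_sdiff h).symm
lemma sF_split (S : Sl2Sys ι L) {T U} (h : T ⊆ U) : S.sF U = S.sF (U \ T) + S.sF T := (Finset.sum_sdiff h).symm

lemma Good.sF {U T : Finset ι} {v : L} (h : S.Good U T v) : S.sF U v = 0 := by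
  rw [S.sF_split h.sub, LinearMap.add_apply, h.kF, sF_of T v h.tee, add_zero]
lemma Good.sH {U T : Finset ι} {v : L} (h : S.Good U T v) : S.sH U v = (-(T.card : ℤ)) • v := by
  have := congrArg (fun f => f v) (S.sF_sE (U \ T))
  simp only [Module.End.mul_apply, LinearMap.sub_apply, h.kE, h.kF, map_zero, zero_sub] at this
  rw [S.sH_split h.sub, LinearMap.add_apply, sH_of T v h.tee, neg_eq_zero.1 this.symm, zero_add]
lemma Good.add {U T : Finset ι} {v : L} (h : S.Good U T v) {i} (hi : i ∉ U) :
    S.Good (insert i U) (insert i T) v := by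
  have e : insert i U \ insert i T = U \ T := by
    ext x; simp only [Finset.mem_sdiff, Finset.mem_insert]
    constructor
    · rintro ⟨a | a, b⟩ <;> tauto
    · rintro ⟨a, b⟩; refine ⟨Or.inr a, ?_⟩; rintro (rfl | c) <;> tauto
  refine ⟨Finset.insert_subset_insert _ h.sub, ?_, ?_, by rw [e]; exact h.kF, by rw [e]; exact h.kE⟩
  · intro j hj; exact h.out j (by simp at hj; tauto)
  · intro j hj
    rcases Finset.mem_insert.1 hj with rfl | hj
    · exact h.out _ hi
    · exact h.tee _ hj
lemma Good.pair {U T : Finset ι} {v : L} (h : S.Good U T v) {i j} (hi : i ∉ U) (hj : j ∈ T) :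
    S.Good (insert i U) (T.erase j) (S.E i v - S.E j v) := by
  have hjU := h.sub hj
  have hij : i ≠ j := by rintro rfl; exact hi hjU
  have hFi := h.out i hi
  have hFj := h.tee j hj
  have e : insert i U \ T.erase j = insert i (insert j (U \ T)) := by
    ext x; simp only [Finset.mem_sdiff, Finset.mem_insert, Finset.mem_erase]
    by_cases hx : x = i
    · subst hx; have := fun q => hi (h.sub q); tauto
    · by_cases hx : x = j
      · subst hx; tauto
      · tauto
  have n1 : i ∉ U \ T := by simp [hi]
  have n2 : j ∉ U \ T := by simp [hj]
  have n3 : i ∉ insert j (U \ T) := by simp [hij, hi]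
  have comm0 : ∀ k, k ≠ i → k ≠ j → S.F k v = 0 → S.F k (S.E i v - S.E j v) = 0 := by
    intro k h1 h2 h3
    rw [map_sub, comm_app (S.cEF i k h1.symm).symm, comm_app (S.cEF j k h2.symm).symm, h3]
    simp
  refine ⟨(Finset.erase_subset _ _).trans (h.sub.trans (Finset.subset_insert _ _)), ?_, ?_, ?_, ?_⟩
  · intro k hk
    simp only [Finset.mem_insert, not_or] at hk
    exact comm0 k hk.1 (by rintro rfl; exact hk.2 hjU) (h.out k hk.2)
  · intro k hk
    have hk' := Finset.mem_erase.1 hk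
    exact comm0 k (by rintro rfl; exact hi (h.sub hk'.2)) hk'.1 (h.tee k hk'.2)
  · rw [e]
    have : S.sF (insert i (insert j (U \ T))) = S.F i + (S.F j + S.sF (U \ T)) := by
      unfold Sl2Sys.sF
      rw [Finset.sum_insert n3, Finset.sum_insert n2]
    rw [this]
    simp only [LinearMap.add_apply, map_sub]
    rw [← comm_app (S.cEsF i _ n1), ← comm_app (S.cEsF j _ n2), h.kF, FE_of i v hFi, FE_of j v hFj,
      ← comm_app (S.cEF i j hij), ← comm_app (S.cEF j i hij.symm), hFi, hFj]
    simp
  · rw [e]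
    have : S.sE (insert i (insert j (U \ T))) = S.E i + (S.E j + S.sE (U \ T)) := by
      unfold Sl2Sys.sE
      rw [Finset.sum_insert n3, Finset.sum_insert n2]
    rw [this]
    have q : ∀ i, S.E i (S.E i v) = 0 := fun i => congrArg (fun f => f v) (S.E2 i)
    simp only [LinearMap.add_apply, map_sub]
    rw [← comm_app (S.cEsE i _), ← comm_app (S.cEsE j _), h.kE, q, q, comm_app (S.cEE i j)]
    simp

lemma Good.F_pair {U T : Finset ι} {v : L} (h : S.Good U T v) {i j} (hi : i ∉ U) (hj : j ∈ T) :
    S.F i (S.E i v - S.E j v) = v := by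
  have hij : j ≠ i := by rintro rfl; exact hi (h.sub hj)
  rw [map_sub, FE_of i v (h.out i hi), ← comm_app (S.cEF j i hij), h.out i hi]
  simp

lemma span_good (tf : ∀ (k : ℤ) (x : L), k ≠ 0 → k • x = 0 → x = 0) (U : Finset ι) : ∀ (m : ℕ) (v : L), (∀ i, i ∉ U → S.F i v = 0) →
    S.sF U v = 0 → S.sH U v = (-(m : ℤ)) • v →
    v ∈ Submodule.span ℤ {x | ∃ T, T.card = m ∧ S.Good U T x} := by
  induction U using Finset.induction_on with
  | empty =>
    intro m v h1 h2 h3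
    rcases Nat.eq_zero_or_pos m with rfl | hm
    · exact Submodule.subset_span ⟨∅, rfl, ⟨subset_rfl, h1, by simp, by simp [Sl2Sys.sF], by simp [Sl2Sys.sE]⟩⟩
    · have : (-(m:ℤ)) • v = 0 := by rw [← h3]; simp [Sl2Sys.sH]
      rw [tf _ _ (by omega) this]
      exact zero_mem _
  | insert i U hi ih =>
    intro m v h1 h2 h3
    have eF : S.sF (insert i U) = S.F i + S.sF U := by
      unfold Sl2Sys.sF; rw [Finset.sum_insert hi]
    have eH : S.sH (insert i U) = S.H i + S.sH U := by
      unfold Sl2Sys.sH; rw [Finset.sum_insert hi]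
    have FF : ∀ v, S.F i (S.F i v) = 0 := fun v => congrArg (fun f => f v) (S.F2 i)
    have hb : S.F i v ∈ Submodule.span ℤ {x | ∃ T, T.card = m + 1 ∧ S.Good U T x} := by
      apply ih
      · intro k hk
        by_cases hki : k = i
        · subst hki; exact FF v
        · rw [comm_app (S.cFF k i), h1 k (by simp [hki, hk]), map_zero]
      · rw [← comm_app (S.cFsF i U)]
        have := congrArg (S.F i) h2
        rwa [eF, LinearMap.add_apply, map_add, FF, zero_add, map_zero] at this
      · rw [← comm_app (S.cFsH i U hi)]
        have := congrArg (S.F i) h3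
        rw [eH, LinearMap.add_apply, map_add] at this
        have q : S.F i (S.H i v) = S.F i v := congrArg (fun f => f v) (S.FH i)
        rw [q, map_zsmul] at this
        rw [eq_sub_of_add_eq' this]
        push_cast; rw [neg_add, add_smul]; simp [sub_eq_add_neg]
    obtain ⟨v', hv', hv'b⟩ : ∃ v' ∈ Submodule.span ℤ {x | ∃ T, T.card = m ∧ S.Good (insert i U) T x},
        S.F i v' = S.F i v := by
      have : Submodule.span ℤ {x | ∃ T, T.card = m + 1 ∧ S.Good U T x} ≤
        (Submodule.span ℤ {x | ∃ T, T.card = m ∧ S.Good (insert i U) T x}).map (S.F i) := by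
        rw [Submodule.span_le]
        rintro x ⟨T, hT, hx⟩
        obtain ⟨j, hj⟩ : T.Nonempty := Finset.card_pos.1 (by omega)
        exact ⟨S.E i x - S.E j x, Submodule.subset_span ⟨T.erase j, by
          rw [Finset.card_erase_of_mem hj]; omega, hx.pair hi hj⟩, hx.F_pair hi hj⟩
      exact this hb
    have hker : ∀ (f : Module.End ℤ L), (∀ x T, T.card = m → S.Good (insert i U) T x → f x = 0) → f v' = 0 := by
      intro f hf
      have : Submodule.span ℤ {x | ∃ T, T.card = m ∧ S.Good (insert i U) T x} ≤ LinearMap.ker f := by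
        rw [Submodule.span_le]
        rintro x ⟨T, hT, hx⟩
        exact hf x T hT hx
      exact this hv'
    have k1 : ∀ k, k ∉ insert i U → S.F k v' = 0 := fun k hk => hker _ fun x T _ hx => hx.out k hk
    have k2 : S.sF (insert i U) v' = 0 := hker _ fun x T _ hx => hx.sF
    have k3 : S.sH (insert i U) v' = (-(m : ℤ)) • v' := by
      have := hker (S.sH (insert i U) + (m : ℤ) • 1) fun x T hT hx => by
        simp [hx.sH, hT]
      simp only [LinearMap.add_apply, LinearMap.smul_apply, Module.End.one_apply] at this
      rw [eq_neg_of_add_eq_zero_left this, neg_smul]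
    obtain ⟨d, hd⟩ : ∃ d, d = v - v' := ⟨_, rfl⟩
    have d0 : S.F i d = 0 := by rw [hd, map_sub, hv'b, sub_self]
    have d1 : ∀ k, k ∉ U → S.F k d = 0 := by
      intro k hk
      by_cases hki : k = i
      · subst hki; exact d0
      · have : k ∉ insert i U := by simp [hki, hk]
        rw [hd, map_sub, h1 k this, k1 k this, sub_zero]
    have d2 : S.sF U d = 0 := by
      have : S.sF (insert i U) d = 0 := by rw [hd, map_sub, h2, k2, sub_zero]
      rwa [eF, LinearMap.add_apply, d0, zero_add] at this
    have d3 : S.sH U d = (1 - (m : ℤ)) • d := by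
      have : S.sH (insert i U) d = (-(m : ℤ)) • d := by rw [hd, map_sub, h3, k3, smul_sub]
      rw [eH, LinearMap.add_apply, H_of i d d0] at this
      rw [eq_sub_of_add_eq' this, sub_smul, one_smul, neg_smul]; abel
    have hdm : d ∈ Submodule.span ℤ {x | ∃ T, T.card = m ∧ S.Good (insert i U) T x} := by
      rcases m with _ | m
      · rw [S.pos_zero tf U d _ (by norm_num) d3 d2]; exact zero_mem _
      · have := ih m d d1 d2 (by rw [d3]; push_cast; ring_nf)
        refine Submodule.span_le.2 ?_ this
        rintro x ⟨T, hT, hx⟩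
        exact Submodule.subset_span ⟨insert i T, by
          rw [Finset.card_insert_of_notMem fun q => hi (hx.sub q), hT], hx.add hi⟩
    rw [show v = d + v' by rw [hd]; abel]
    exact add_mem hdm hv'

lemma Good.pow {U T : Finset ι} {v : L} (h : S.Good U T v) (k : ℕ) :
    (S.sE U ^ k) v = (S.sE T ^ k) v := by
  induction k with
  | zero => rfl
  | succ k ih =>
    rw [pow_succ', Module.End.mul_apply, ih, S.sE_split h.sub, LinearMap.add_apply,
      comm_app ((S.csEsE (U \ T) T).pow_right k), h.kE, map_zero, zero_add, pow_succ', Module.End.mul_apply]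

/-- coefficients -/
def gco (q i : ℕ) : ℤ := (-1) ^ i * ((q + i - 1).choose i : ℕ)

lemma gco_succ (q i : ℕ) (hq : 1 ≤ q) : gco q (i+1) * (i+1) = - gco q i * (q + i) := by
  have := Nat.add_one_mul_choose_eq (q + i - 1) i
  rw [show q + i - 1 + 1 = q + i by omega] at this
  have h2 : ((q + i : ℕ) : ℤ) * ((q + i - 1).choose i : ℕ) = ((q + i).choose (i+1) : ℕ) * ((i + 1 : ℕ) : ℤ) := by
    exact_mod_cast this
  unfold gco
  rw [show q + (i + 1) - 1 = q + i by omega, pow_succ]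
  push_cast at h2
  linear_combination (-1) ^ i * h2

lemma gco_mod (p : ℕ) (hp : p.Prime) (q c0 : ℕ) (hq : 1 ≤ q) (hc : c0 < p) (hd : (p : ℤ) ∣ q + c0) (i : ℕ) (hi : i ≤ c0) :
    (p : ℤ) ∣ c0.choose i - gco q i := by
  induction i with
  | zero => simp [gco]
  | succ i ih =>
    have ih := ih (by omega)
    have h1 := gco_succ q i hq
    have h2 : ((c0.choose (i+1) : ℕ) : ℤ) * (i + 1) = (c0.choose i : ℕ) * (c0 - i) := by
      have := Nat.choose_succ_right_eq c0 i
      have h3 : ((c0 - i : ℕ) : ℤ) = c0 - i := by omega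
      rw [← h3]; exact_mod_cast this
    have : (p : ℤ) ∣ (c0.choose (i+1) - gco q (i+1)) * (i + 1 : ℕ) := by
      have e : (c0.choose (i+1) - gco q (i+1)) * ((i + 1 : ℕ) : ℤ) =
        (c0.choose i - gco q i) * (c0 - i) + gco q i * (q + c0) := by
        push_cast; linear_combination h2 - h1
      rw [e]; exact dvd_add (ih.mul_right _) (hd.mul_left _)
    rcases (Nat.prime_iff_prime_int.1 hp).dvd_or_dvd this with h | h
    · exact h
    · have := Nat.le_of_dvd (by omega) (Int.natCast_dvd_natCast.1 h); omega

lemma sq0_pow {R : Type*} [Ring R] {x y : R} (h : Commute x y) (hx : x * x = 0) (k : ℕ) :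
    (x + y) ^ (k+1) = y ^ (k+1) + (k + 1 : ℕ) * (x * y ^ k) := by
  induction k with
  | zero => simp [add_comm]
  | succ k ih =>
    have h1 : x * (y ^ (k+1)) = y ^ (k+1) * x := (h.pow_right _).eq
    have h2 : x * (((k + 1 : ℕ) : R) * (x * y ^ k)) = 0 := by
      rw [← mul_assoc, ← (Nat.cast_commute (k+1) x).eq, mul_assoc, ← mul_assoc x x, hx]; simp
    have h3 : y * (((k + 1 : ℕ) : R) * (x * y ^ k)) = (k + 1 : ℕ) * (x * y ^ (k + 1)) := by
      rw [← mul_assoc, ← (Nat.cast_commute (k+1) y).eq, mul_assoc, ← mul_assoc y x, ← h.eq, mul_assoc,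
        ← pow_succ']
    rw [pow_succ', ih, add_mul, mul_add, mul_add, h2, h3, ← pow_succ' y]
    push_cast
    noncomm_ring

lemma sE_prime (S : Sl2Sys ι L) (p : ℕ) (hp : p.Prime) (U : Finset ι) :
    ∃ r, S.sE U ^ p = (p : Module.End ℤ L) * r := by
  induction U using Finset.induction_on with
  | empty => exact ⟨0, by simp [sE, hp.ne_zero]⟩
  | insert i U hi ih =>
    obtain ⟨r, hr⟩ := ih
    obtain ⟨r2, h2⟩ := (S.cEsE i U).exists_add_pow_prime_eq hp
    have e : S.sE (insert i U) = S.E i + S.sE U := by unfold Sl2Sys.sE; rw [Finset.sum_insert hi]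
    have e0 : S.E i ^ p = 0 := pow_eq_zero_of_le hp.two_le (by rw [sq, S.E2])
    exact ⟨r + S.E i * S.sE U * r2, by rw [e, h2, hr, e0]; noncomm_ring⟩

lemma sE_prime_app (S : Sl2Sys ι L) (p : ℕ) (hp : p.Prime) (U : Finset ι) :
    ∃ r : Module.End ℤ L, ∀ v, (S.sE U ^ p) v = (p : ℤ) • r v := by
  obtain ⟨r, hr⟩ := S.sE_prime p hp U
  exact ⟨r, fun v => by rw [hr, ← nsmul_eq_mul, LinearMap.smul_apply, natCast_zsmul]⟩

lemma dvd_cancel (p k : ℕ) (hp : p.Prime) (hk : 0 < k) (hkp : k < p) (v w : L)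
    (h : (k : ℤ) • v = (p : ℤ) • w) : ∃ w', v = (p : ℤ) • w' := by
  have : IsCoprime (k : ℤ) (p : ℤ) := by
    rw [Nat.isCoprime_iff_coprime]
    exact ((Nat.Prime.coprime_iff_not_dvd hp).2 fun q => by have := Nat.le_of_dvd hk q; omega).symm
  obtain ⟨a, b, hab⟩ := this
  refine ⟨a • w + b • v, ?_⟩
  rw [smul_add, smul_comm, ← h, smul_smul, smul_smul, ← add_smul, mul_comm (p : ℤ), hab, one_smul]

lemma nondiv (p : ℕ) (hp : p.Prime) (v : L) : ∀ (k : ℕ) (T : Finset ι), k < p → k ≤ T.card →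
    (∀ i ∈ T, S.F i v = 0) → ∀ w, (S.sE T ^ k) v = (p : ℤ) • w → ∃ w', v = (p : ℤ) • w' := by
  intro k
  induction k with
  | zero => intro T _ _ _ w h; exact ⟨w, by simpa using h⟩
  | succ k ih =>
    intro T hk hT hF w h
    obtain ⟨i, hi⟩ : T.Nonempty := Finset.card_pos.1 (by omega)
    have e : S.sE T = S.E i + S.sE (T.erase i) := (Finset.add_sum_erase _ _ hi).symm
    have c := S.cFsE i _ (Finset.notMem_erase i T)
    have h2 := congrArg (S.F i) h
    rw [e, sq0_pow (S.cEsE i _) (S.E2 i), LinearMap.add_apply, map_add, comm_app (c.pow_right _), hF i hi,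
      map_zero, zero_add, ← nsmul_eq_mul, LinearMap.smul_apply, map_nsmul, Module.End.mul_apply,
      FE_of, map_zsmul] at h2
    · rw [← natCast_zsmul] at h2
      obtain ⟨w', hw'⟩ := dvd_cancel p (k+1) hp (by omega) hk _ _ h2
      exact ih (T.erase i) (by omega) (by rw [Finset.card_erase_of_mem hi]; omega)
        (fun j hj => hF j (Finset.mem_of_mem_erase hj)) w' hw'
    · rw [comm_app (c.pow_right _), hF i hi, map_zero]

lemma exists_good (P : ℤ) (x : L) (hx : ∀ i, S.F i x = 0) (hx2 : ∀ w, x ≠ P • w) (m r : ℕ) :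
    ∀ (U : Finset ι), U.card = m + 2 * r → ∃ T v, T.card = m ∧ S.Good U T v ∧ ∀ w, v ≠ P • w := by
  induction r with
  | zero =>
    intro U hU
    exact ⟨U, x, hU, ⟨subset_rfl, fun i _ => hx i, fun i _ => hx i, by simp [Sl2Sys.sF], by simp [Sl2Sys.sE]⟩, hx2⟩
  | succ r ih =>
    intro U hU
    obtain ⟨i, hi⟩ : U.Nonempty := Finset.card_pos.1 (by omega)
    have c1 := Finset.card_erase_of_mem hi
    obtain ⟨j, hj⟩ : (U.erase i).Nonempty := Finset.card_pos.1 (by omega)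
    have c2 := Finset.card_erase_of_mem hj
    obtain ⟨T, v, hT, hv, hw⟩ := ih ((U.erase i).erase j) (by omega)
    have g := hv.add (Finset.notMem_erase j _)
    have hjT : j ∉ T := fun q => Finset.notMem_erase j _ (hv.sub q)
    rw [Finset.insert_erase hj] at g
    have g2 := g.pair (Finset.notMem_erase i U) (Finset.mem_insert_self j T)
    have g3 := g.F_pair (Finset.notMem_erase i U) (Finset.mem_insert_self j T)
    rw [Finset.insert_erase hi] at g2
    refine ⟨_, _, ?_, g2, ?_⟩
    · rw [Finset.erase_insert hjT, hT]
    · intro w h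
      rw [h, map_zsmul] at g3
      exact hw _ g3.symm

lemma Good.lift {U T : Finset ι} {v : L} (h : S.Good U T v) (p : ℕ) (hp : p.Prime) (c0 q : ℕ) (hq : 1 ≤ q)
    (hc : c0 < p) (hd : (p : ℤ) ∣ q + c0) (hT : T.card + 1 = q + c0 + c0) :
    ∃ s, S.sF U s = 0 ∧ S.sH U s = (-(T.card : ℤ) + 2 * c0) • s ∧
      ∃ w, (S.sE U ^ c0) v = s + (p : ℤ) • w := by
  obtain ⟨A, hAT, hA⟩ := Finset.exists_subset_card_eq (s := T) (n := c0) (by omega)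
  obtain ⟨B, hB⟩ : ∃ B, B = T \ A := ⟨_, rfl⟩
  have hBT : B ⊆ T := by rw [hB]; exact Finset.sdiff_subset
  have hBc : B.card + 1 = q + c0 := by
    rw [hB, Finset.card_sdiff_of_subset hAT]; omega
  have hAB : Disjoint A B := by rw [hB]; exact Finset.disjoint_sdiff
  have hRA : Disjoint A (U \ T) := Finset.disjoint_sdiff.mono_left hAT
  have hRB : Disjoint B (U \ T) := Finset.disjoint_sdiff.mono_left hBT
  have tA : ∀ i ∈ A, S.F i v = 0 := fun i hi => h.tee i (hAT hi)
  have tB : ∀ i ∈ B, S.F i v = 0 := fun i hi => h.tee i (hBT hi)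
  have eE : S.sE T = S.sE A + S.sE B := by rw [S.sE_split hAT, hB, add_comm]
  have eF : S.sF U = S.sF (U \ T) + (S.sF B + S.sF A) := by rw [S.sF_split h.sub, S.sF_split hAT, hB]
  obtain ⟨X, hX⟩ : ∃ X : ℕ → ℕ → L, X = fun i j => (S.sE A ^ i) ((S.sE B ^ j) v) := ⟨_, rfl⟩
  have X' : ∀ i j, X i j = (S.sE B ^ j) ((S.sE A ^ i) v) := fun i j => by
    rw [hX]; exact comm_app ((S.csEsE A B).pow_pow i j) v
  have FR : ∀ i j, S.sF (U \ T) (X i j) = 0 := fun i j => by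
    rw [hX]
    simp only
    rw [← comm_app ((S.csEsF A _ hRA).pow_left i), ← comm_app ((S.csEsF B _ hRB).pow_left j), h.kF]
    simp
  have FA0 : ∀ j, S.sF A (X 0 j) = 0 := fun j => by
    rw [X', ← comm_app ((S.csEsF B A hAB.symm).pow_left j)]
    simp [sF_of A v tA]
  have FA : ∀ i j, S.sF A (X (i+1) j) = ((i+1) * (c0 - i) : ℤ) • X i j := fun i j => by
    rw [X', ← comm_app ((S.csEsF B A hAB.symm).pow_left j), S.sF_pow A v _ (sH_of A v tA) (sF_of A v tA),
      map_zsmul, ← X', hA]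
    congr 1; ring
  have FB0 : ∀ i, S.sF B (X i 0) = 0 := fun i => by
    rw [hX]; simp only
    rw [← comm_app ((S.csEsF A B hAB).pow_left i)]
    simp [sF_of B v tB]
  have hBc' : (B.card : ℤ) = q + c0 - 1 := by omega
  have FB : ∀ i j, S.sF B (X i (j+1)) = ((j+1) * (q + c0 - 1 - j) : ℤ) • X i j := fun i j => by
    rw [hX]; simp only
    rw [← comm_app ((S.csEsF A B hAB).pow_left i), S.sF_pow B v _ (sH_of B v tB) (sF_of B v tB),
      map_zsmul, hBc']
    congr 1; ring
  refine ⟨∑ i ∈ Finset.range (c0 + 1), gco q i • X i (c0 - i), ?_, ?_, ?_⟩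
  · rw [map_sum]
    have e1 : ∀ i, S.sF U (gco q i • X i (c0 - i)) =
        gco q i • S.sF B (X i (c0 - i)) + gco q i • S.sF A (X i (c0 - i)) := fun i => by
      rw [map_zsmul, eF]; simp [FR]
    rw [Finset.sum_congr rfl fun i _ => e1 i, Finset.sum_add_distrib, Finset.sum_range_succ, Finset.sum_range_succ',
      Nat.sub_self, FB0, FA0, smul_zero, smul_zero, add_zero, add_zero, ← Finset.sum_add_distrib]
    apply Finset.sum_eq_zero
    intro i hi
    have hi := Finset.mem_range.1 hi
    obtain ⟨j, hj⟩ : ∃ j, c0 = i + 1 + j := ⟨c0 - (i+1), by omega⟩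
    rw [show c0 - i = j + 1 by omega, show c0 - (i + 1) = j by omega, FB, FA, smul_smul, smul_smul, ← add_smul]
    have g := gco_succ q i hq
    have hj' : (c0 : ℤ) = i + 1 + j := by omega
    have : gco q i * ((j + 1) * (q + c0 - 1 - j)) + gco q (i + 1) * ((i + 1) * (c0 - i)) = 0 := by
      rw [hj']; linear_combination (j + 1) * g
    rw [this, zero_smul]
  · rw [map_sum, Finset.smul_sum]
    refine Finset.sum_congr rfl fun i hi => ?_
    have hi := Finset.mem_range.1 hi
    have := S.sH_pow A U (hAT.trans h.sub) _ _ (S.sH_pow B U (hBT.trans h.sub) v _ h.sH (c0 - i)) i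
    rw [map_zsmul, hX]
    simp only
    rw [this, smul_comm]
    congr 1
    push_cast [Nat.cast_sub (show i ≤ c0 by omega)]
    ring
  · have : ∀ i, ∃ d : ℤ, i ≤ c0 → (c0.choose i : ℤ) - gco q i = p * d := fun i => by
      by_cases hi : i ≤ c0
      · obtain ⟨d, hd⟩ := gco_mod p hp q c0 hq hc hd i hi
        exact ⟨d, fun _ => hd⟩
      · exact ⟨0, fun h => absurd h hi⟩
    choose d hd using this
    refine ⟨∑ i ∈ Finset.range (c0 + 1), d i • X i (c0 - i), ?_⟩
    rw [h.pow, eE, (S.csEsE A B).add_pow, LinearMap.sum_apply, Finset.smul_sum, ← Finset.sum_add_distrib]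
    refine Finset.sum_congr rfl fun i hi => ?_
    have hi := Finset.mem_range.1 hi
    rw [smul_smul, ← add_smul, ← hd i (by omega), add_sub_cancel, ← Nat.cast_commute, ← nsmul_eq_mul,
      LinearMap.smul_apply, natCast_zsmul, hX]
    rfl

lemma lift_all [Fintype ι] (tf : ∀ (k : ℤ) (x : L), k ≠ 0 → k • x = 0 → x = 0)
    (p : ℕ) (hp : p.Prime) (c0 q m : ℕ) (hq : 1 ≤ q)
    (hc : c0 < p) (hd : (p : ℤ) ∣ q + c0) (hT : m + 1 = q + c0 + c0) (v : L)
    (h1 : S.sF Finset.univ v = 0) (h2 : S.sH Finset.univ v = (-(m : ℤ)) • v) :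
    ∃ s, S.sF Finset.univ s = 0 ∧ S.sH Finset.univ s = (-(m : ℤ) + 2 * c0) • s ∧
      ∃ w, (S.sE Finset.univ ^ c0) v = s + (p : ℤ) • w := by
  have := S.span_good tf Finset.univ m v (by simp) h1 h2
  clear h1 h2
  induction this using Submodule.span_induction with
  | mem x hx =>
    obtain ⟨T, hTm, hx⟩ := hx
    subst hTm
    exact hx.lift p hp c0 q hq hc hd hT
  | zero => exact ⟨0, by simp, by simp, 0, by simp⟩
  | add x y _ _ hx hy =>
    obtain ⟨s, a1, a2, w, a3⟩ := hx
    obtain ⟨t, b1, b2, u, b3⟩ := hy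
    refine ⟨s + t, by rw [map_add, a1, b1, add_zero], by rw [map_add, a2, b2, smul_add], w + u, ?_⟩
    rw [map_add, a3, b3, smul_add]; abel
  | smul a x _ hx =>
    obtain ⟨s, a1, a2, w, a3⟩ := hx
    refine ⟨a • s, by rw [map_zsmul, a1, smul_zero], by rw [map_zsmul, a2, smul_comm], a • w, ?_⟩
    rw [map_zsmul, a3, smul_add, smul_comm a (p : ℤ)]

end Sl2Sys

section Concrete

noncomputable def site (n : ℕ) (i : Fin n) (f : (Fin 2 → ℤ) →ₗ[ℤ] (Fin 2 → ℤ)) : Module.End ℤ (Ltens n) :=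
  PiTensorProduct.map (Function.update (fun _ => LinearMap.id) i f)

lemma site_mul (n i f g) : site n i f * site n i g = site n i (f * g) := by
  unfold site
  rw [← PiTensorProduct.map_mul]
  congr 1
  funext j
  by_cases h : j = i
  · subst h; simp
  · simp [h]; rfl

lemma site_comm (n) (i j : Fin n) (hij : i ≠ j) (f g) : Commute (site n i f) (site n j g) := by
  unfold site
  show _ * _ = _ * _
  rw [← PiTensorProduct.map_mul, ← PiTensorProduct.map_mul]
  congr 1
  funext k
  by_cases h : k = i
  · subst h; simp [hij]; rfl
  · by_cases h' : k = j
    · subst h'; simp [h]; rfl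
    · simp [h, h']

lemma site_add (n i f g) : site n i (f + g) = site n i f + site n i g := by
  unfold site
  exact PiTensorProduct.map_update_add (R := ℤ) (s := fun _ : Fin n => Fin 2 → ℤ)
    (t := fun _ : Fin n => Fin 2 → ℤ) (fun _ => LinearMap.id) i f g

lemma site_zero (n i) : site n i 0 = 0 := by
  have := site_add n i 0 0
  simpa using this

lemma site_one (n i) : site n i 1 = 1 := by
  unfold site
  have : Function.update (fun _ : Fin n => (LinearMap.id : (Fin 2 → ℤ) →ₗ[ℤ] (Fin 2 → ℤ))) i 1 = fun _ => LinearMap.id :=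
    Function.update_eq_self i _
  rw [this]
  exact PiTensorProduct.map_id

noncomputable def conc (n : ℕ) : Sl2Sys (Fin n) (Ltens n) where
  E i := site n i eMap
  F i := site n i fMap
  E2 i := by
    rw [site_mul, show eMap * eMap = 0 from ?_, site_zero]
    rw [eMap, Module.End.mul_eq_comp, ← Matrix.toLin'_mul, ← map_zero Matrix.toLin']
    congr 1
    ext a b; fin_cases a <;> fin_cases b <;> simp
  F2 i := by
    rw [site_mul, show fMap * fMap = 0 from ?_, site_zero]
    rw [fMap, Module.End.mul_eq_comp, ← Matrix.toLin'_mul, ← map_zero Matrix.toLin']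
    congr 1
    ext a b; fin_cases a <;> fin_cases b <;> simp
  EF i := by
    rw [site_mul, site_mul, ← site_add, show eMap * fMap + fMap * eMap = 1 from ?_, site_one]
    rw [eMap, fMap, Module.End.mul_eq_comp, Module.End.mul_eq_comp, ← Matrix.toLin'_mul, ← Matrix.toLin'_mul,
      ← map_add]
    rw [Module.End.one_eq_id, ← Matrix.toLin'_one]
    congr 1
    ext a b; fin_cases a <;> fin_cases b <;> simp
  cEE i j := by
    by_cases h : i = j
    · subst h; exact Commute.refl _
    · exact site_comm n i j h _ _
  cFF i j := by
    by_cases h : i = j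
    · subst h; exact Commute.refl _
    · exact site_comm n i j h _ _
  cEF i j h := site_comm n i j h _ _

lemma conc_H (n i) : (conc n).H i = site n i hMap := by
  have : eMap * fMap = hMap + fMap * eMap := by
    rw [eMap, fMap, hMap, Module.End.mul_eq_comp, Module.End.mul_eq_comp, ← Matrix.toLin'_mul,
      ← Matrix.toLin'_mul, ← map_add]
    congr 1
    ext a b; fin_cases a <;> fin_cases b <;> simp
  show site n i eMap * site n i fMap - site n i fMap * site n i eMap = _
  rw [site_mul, site_mul, this, site_add, add_sub_cancel_right]

lemma conc_sE (n) : (conc n).sE Finset.univ = Eop n := rfl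
lemma conc_sF (n) : (conc n).sF Finset.univ = Fop n := rfl
lemma conc_sH (n) : (conc n).sH Finset.univ = Hop n := by
  unfold Sl2Sys.sH
  rw [Finset.sum_congr rfl fun i _ => conc_H n i]; rfl

lemma Ltens_tf (n) (k : ℤ) (x : Ltens n) (hk : k ≠ 0) (h : k • x = 0) : x = 0 := by
  let b := Basis.piTensorProduct (R := ℤ) (fun _ : Fin n => Pi.basisFun ℤ (Fin 2))
  apply b.repr.injective
  rw [map_zero]
  ext j
  have := DFunLike.congr_fun (congrArg b.repr h) j
  rw [map_zsmul] at this
  simpa [hk] using this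

lemma vac_exists (n : ℕ) (p : ℕ) (hp : p.Prime) : ∃ x : Ltens n, (∀ i, (conc n).F i x = 0) ∧ ∀ w, x ≠ (p : ℤ) • w := by
  refine ⟨PiTensorProduct.tprod ℤ fun _ => Pi.single 0 1, ?_, ?_⟩
  · intro i
    show site n i fMap _ = 0
    unfold site
    rw [PiTensorProduct.map_tprod]
    apply (PiTensorProduct.tprod ℤ).map_coord_zero i
    ext a; fin_cases a <;> simp [fMap]
  · intro w h
    let b := Basis.piTensorProduct (R := ℤ) (fun _ : Fin n => Pi.basisFun ℤ (Fin 2))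
    have := DFunLike.congr_fun (congrArg b.repr h) (fun _ => 0)
    rw [map_zsmul, Basis.piTensorProduct_repr_tprod_apply] at this
    simp at this
    have h2 : (p : ℤ) ∣ 1 := ⟨_, this⟩
    exact hp.one_lt.ne' (by exact_mod_cast Int.eq_one_of_dvd_one (by positivity) h2)

end Concrete

/-- Let `p` be an odd prime, `c` a positive integer not divisible by `p`, and
`c₀ ∈ {1,…,p-1}` with `c ≡ c₀ (mod p)`. Then (i) `E^{c₀}(S^{(c)}) ⊆ S^{(c-2c₀)} + pL`;
(ii) `E^p(L) ⊆ pL`; (iii) if moreover `c > c₀`, `n ≥ c-1` and `n ≡ c-1 (mod 2)`, then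
`E^{c₀}(S^{(c)}) ⊄ pL`. -/
theorem pow_E_on_lowest_weight (p : ℕ) (hp : p.Prime) (hodd : Odd p)
    (n : ℕ) (hn : 1 ≤ n) (c : ℕ) (hcpos : 0 < c) (hpc : ¬ p ∣ c)
    (c0 : ℕ) (hc01 : 1 ≤ c0) (hc02 : c0 ≤ p - 1) (hmod : c ≡ c0 [MOD p]) :
    (∀ v ∈ Sspace n c, ∃ s ∈ Sspace n ((c : ℤ) - 2 * c0), ∃ w,
      ((Eop n) ^ c0) v = s + (p : ℤ) • w) ∧
    (∀ v : Ltens n, ∃ w, ((Eop n) ^ p) v = (p : ℤ) • w) ∧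
    (c0 < c → c - 1 ≤ n → n % 2 = (c - 1) % 2 →
      ∃ v ∈ Sspace n c, ∀ w, ((Eop n) ^ c0) v ≠ (p : ℤ) • w) := by
  have hp2 := hp.two_le
  refine ⟨?_, ?_, ?_⟩
  · rintro v ⟨hF, hH⟩
    rw [← conc_sF] at hF
    rw [← conc_sH] at hH
    rcases eq_or_ne c c0 with rfl | hne
    · refine ⟨(Eop n ^ c) v, ⟨?_, ?_⟩, 0, by simp⟩
      · obtain ⟨k, rfl⟩ : ∃ k, c = k + 1 := ⟨c - 1, by omega⟩
        rw [← conc_sF, ← conc_sE, (conc n).sF_pow _ v _ hH hF]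
        simp
      · rw [← conc_sH, ← conc_sE, (conc n).sH_pow _ _ subset_rfl v _ hH]
        congr 1; ring
    · have hd : (p : ℤ) ∣ (c : ℤ) - c0 := (Nat.modEq_iff_dvd.1 hmod.symm)
      have hcc : c0 < c := by
        rcases Nat.lt_or_ge c0 c with h | h
        · exact h
        · exact absurd (Nat.ModEq.eq_of_lt_of_lt hmod (by omega) (by omega)) hne
      have hge : p ≤ c - c0 := by
        apply Nat.le_of_dvd (by omega)
        rw [← Int.natCast_dvd_natCast, Nat.cast_sub hcc.le]; exact hd
      obtain ⟨s, h1, h2, w, h3⟩ := (conc n).lift_all (Ltens_tf n) p hp c0 (c - 2 * c0) (c - 1) (by omega) (by omega)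
        (by convert hd using 1; omega) (by omega) v hF
        (by rw [hH]; congr 1; omega)
      refine ⟨s, ⟨?_, ?_⟩, w, h3⟩
      · rw [← conc_sF]; exact h1
      · rw [← conc_sH, h2]; congr 1; omega
  · intro v
    obtain ⟨r, hr⟩ := (conc n).sE_prime_app p hp Finset.univ
    refine ⟨r v, ?_⟩
    rw [← conc_sE]; exact hr v
  · intro hcc hcn hpar
    obtain ⟨x, hx1, hx2⟩ := vac_exists n p hp
    obtain ⟨T, v, hT, hv, hw⟩ := (conc n).exists_good p x hx1 hx2 (c - 1) ((n - (c - 1)) / 2) Finset.univ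
      (by rw [Finset.card_univ, Fintype.card_fin]; omega)
    refine ⟨v, ⟨?_, ?_⟩, ?_⟩
    · rw [← conc_sF]; exact hv.sF
    · rw [← conc_sH, hv.sH, hT]; congr 1; omega
    · intro w h
      rw [← conc_sE, hv.pow] at h
      obtain ⟨w', hw'⟩ := (conc n).nondiv p hp v c0 T (by omega) (by omega) hv.tee w h
      exact hw w' hw'
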